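/- Under the stated parameter constraints, Im g(t) < 0 for every t ≥ 0; consequently t ↦ Im S(t) is strictly decreasing on [0,∞). -/

import Mathlib

open MeasureTheory Set

/-- `t₀(α) = 2πα/(α+2)`. -/
noncomputable def t0 (α : ℝ) : ℝ := 2 * Real.pi * α / (α + 2)

/-!
The values `q(t) = c t^α - μ` lie on the line `-μ + ℝ c`, which runs in the direction `θ ∈ [0, π]`
and, because `θ - π < φ < θ`, misses the ray `[0, ∞)`. So no square root of `q(t)` is real, and
`Im g`, which starts at `-cos (φ / 2) < 0`, never changes sign.
-/

open ComplexConjugate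

theorem lt_of_isPreconnected_of_forall_ne {X β : Type*} [TopologicalSpace X] [LinearOrder β]
    [TopologicalSpace β] [OrderClosedTopology β] {s : Set X} (hs : IsPreconnected s) {f : X → β}
    (hf : ContinuousOn f s) {y : β} (hne : ∀ x ∈ s, f x ≠ y) {a : X} (ha : a ∈ s) (hay : f a < y)
    {x : X} (hx : x ∈ s) : f x < y := by
  by_contra! hyx
  obtain ⟨z, hz, hzy⟩ := hs.intermediate_value ha hx hf ⟨hay.le, hyx⟩
  exact hne z hz hzy

section SquareRoots

variable {c μ : ℂ}

theorem im_ne_zero_of_sq_eq_mul_ofReal_sub {r : ℝ} {w : ℂ} (hc : 0 ≤ c.im)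
    (hμ : (μ * conj c).im < 0) (hw : w ^ 2 = c * r - μ) : w.im ≠ 0 := by
  intro him
  have hw_real : w = (w.re : ℂ) := Complex.ext rfl him
  -- Multiplying by `conj c` makes the coefficient of `r` real, so `r` leaves the imaginary part.
  have hmul : (w.re ^ 2 : ℝ) * conj c = Complex.normSq c * r - μ * conj c := by
    rw [Complex.ofReal_pow, ← hw_real, hw, ← Complex.mul_conj]
    ring
  have him_eq : -(w.re ^ 2 * c.im) = -(μ * conj c).im := by
    simpa only [Complex.im_ofReal_mul, Complex.conj_im, Complex.sub_im, ← Complex.ofReal_mul,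
      Complex.ofReal_im, zero_sub, mul_neg] using congrArg Complex.im hmul
  linarith [mul_nonneg (sq_nonneg w.re) hc]

theorem im_neg_of_continuousOn_of_sq_eq_mul_ofReal_sub {X : Type*} [TopologicalSpace X]
    {s : Set X} (hs : IsPreconnected s) {ρ : X → ℝ} {g : X → ℂ} (hc : 0 ≤ c.im)
    (hμ : (μ * conj c).im < 0) (hg : ContinuousOn g s) (hgsq : ∀ x ∈ s, g x ^ 2 = c * ρ x - μ)
    {a : X} (ha : a ∈ s) (hga : (g a).im < 0) {x : X} (hx : x ∈ s) : (g x).im < 0 :=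
  lt_of_isPreconnected_of_forall_ne hs (Complex.continuous_im.comp_continuousOn hg)
    (fun y hy => im_ne_zero_of_sq_eq_mul_ofReal_sub hc hμ (hgsq y hy)) ha hga hx

end SquareRoots

section Primitives

variable {s : Set ℝ} {a : ℝ}

theorem strictAntiOn_intervalIntegral_of_neg (hs : s.OrdConnected) {f : ℝ → ℝ}
    (hf : ∀ t ∈ s, IntervalIntegrable f volume a t) (hneg : ∀ t ∈ s, f t < 0) :
    StrictAntiOn (fun t => ∫ x in a..t, f x) s := by
  intro u hu v hv huv
  have hpos : 0 < ∫ x in u..v, -f x :=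
    intervalIntegral.intervalIntegral_pos_of_pos_on ((hf u hu).symm.trans (hf v hv)).neg
      (fun x hx => neg_pos.2 (hneg x (hs.out hu hv (Ioo_subset_Icc_self hx)))) huv
  rwa [intervalIntegral.integral_neg,
    ← intervalIntegral.integral_interval_sub_left (hf v hv) (hf u hu), neg_sub, sub_pos] at hpos

theorem strictAntiOn_im_intervalIntegral_of_im_neg (hs : s.OrdConnected) (ha : a ∈ s) {g : ℝ → ℂ}
    (hg : ContinuousOn g s) (hneg : ∀ t ∈ s, (g t).im < 0) :
    StrictAntiOn (fun t => (∫ x in a..t, g x).im) s := by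
  have hint : ∀ t ∈ s, IntervalIntegrable g volume a t := fun t ht =>
    (hg.mono (hs.uIcc_subset ha ht)).intervalIntegrable
  have him : EqOn (fun t => ∫ x in a..t, (g x).im) (fun t => (∫ x in a..t, g x).im) s :=
    fun t ht => intervalIntegral.intervalIntegral_im (hint t ht)
  exact (strictAntiOn_intervalIntegral_of_neg hs
    (fun t ht => ⟨(hint t ht).1.im, (hint t ht).2.im⟩) hneg).congr him

end Primitives

section Angles

variable {α θ δ φ : ℝ}

theorem im_exp_I_mul (x : ℝ) : (Complex.exp (Complex.I * x)).im = Real.sin x := by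
  rw [mul_comm, Complex.exp_ofReal_mul_I_im]

theorem im_exp_I_mul_mul_conj_exp_I_mul (x y : ℝ) :
    (Complex.exp (Complex.I * x) * conj (Complex.exp (Complex.I * y))).im = Real.sin (x - y) := by
  rw [← Complex.exp_conj, ← Complex.exp_add, ← im_exp_I_mul]
  simp only [map_mul, Complex.conj_I, Complex.conj_ofReal, Complex.ofReal_sub]
  ring_nf

theorem im_neg_I_mul_exp_I_mul (x : ℝ) :
    (-Complex.I * Complex.exp (Complex.I * x)).im = -Real.cos x := by
  rw [neg_mul, Complex.neg_im, Complex.I_mul_im, mul_comm, Complex.exp_ofReal_mul_I_re]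

theorem t0_pos (hα : 0 < α) : 0 < t0 α := by
  unfold t0
  positivity

theorem lt_add_pi_of_t0_sub_lt (hα : 0 < α) (hθ : θ < Real.pi)
    (hδ : δ < (Real.pi * min 1 α - θ) / 2) (hφ : t0 α - δ < φ) : θ < φ + Real.pi := by
  have hmin : Real.pi * min 1 α ≤ Real.pi :=
    mul_le_of_le_one_right Real.pi_pos.le (min_le_left 1 α)
  linarith [t0_pos hα]

end Angles

theorem stmt9_general {θ φ : ℝ} (hθ0 : 0 ≤ θ) (hθπ : θ ≤ Real.pi) (hφθ : φ < θ)
    (hθφ : θ < φ + Real.pi) {ρ : ℝ → ℝ} {g : ℝ → ℂ} (hgcont : ContinuousOn g (Ici 0))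
    (hgsq : ∀ t : ℝ, 0 ≤ t →
      g t ^ 2 = Complex.exp (Complex.I * θ) * ρ t - Complex.exp (Complex.I * φ))
    (hg0 : g 0 = -Complex.I * Complex.exp (Complex.I * ((φ / 2 : ℝ) : ℂ)))
    {S : ℝ → ℂ} (hS : ∀ t : ℝ, S t = ∫ s in (0 : ℝ)..t, g s) :
    (∀ t : ℝ, 0 ≤ t → (g t).im < 0) ∧ StrictAntiOn (fun t => (S t).im) (Ici 0) := by
  have hc : 0 ≤ (Complex.exp (Complex.I * θ)).im :=
    im_exp_I_mul θ ▸ Real.sin_nonneg_of_nonneg_of_le_pi hθ0 hθπ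
  have hμ : (Complex.exp (Complex.I * φ) * conj (Complex.exp (Complex.I * θ))).im < 0 :=
    im_exp_I_mul_mul_conj_exp_I_mul φ θ ▸
      Real.sin_neg_of_neg_of_neg_pi_lt (sub_neg.2 hφθ) (by linarith)
  have hg0_im : (g 0).im < 0 := by
    rw [hg0, im_neg_I_mul_exp_I_mul, neg_lt_zero]
    exact Real.cos_pos_of_mem_Ioo ⟨by linarith, by linarith⟩
  have hneg : ∀ t ∈ Ici (0 : ℝ), (g t).im < 0 := fun _ =>
    im_neg_of_continuousOn_of_sq_eq_mul_ofReal_sub isPreconnected_Ici hc hμ hgcont hgsq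
      self_mem_Ici hg0_im
  refine ⟨hneg, ?_⟩
  simpa only [hS] using
    strictAntiOn_im_intervalIntegral_of_im_neg ordConnected_Ici self_mem_Ici hgcont hneg

/-- with `c = e^{iθ}`, `μ = e^{iφ}`, `q(t) = c t^α − μ`, `g` the continuous
branch of `√q` on `[0,∞)` with `g(0) = −i e^{iφ/2}` and `S(t) = ∫₀^t g`:
`Im g(t) < 0` for all `t ≥ 0`, hence `t ↦ Im S(t)` is strictly decreasing on `[0,∞)`. -/
theorem stmt9 (α θ δ φ : ℝ) (hα0 : 0 < α) (hα2 : α < 2)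
    (hθ1 : t0 α ≤ θ) (hθ2 : θ < min Real.pi (Real.pi * α))
    (hδ1 : 0 < δ) (hδ2 : δ < (Real.pi * min 1 α - θ) / 2)
    (hφ1 : t0 α - δ < φ) (hφ2 : φ < t0 α)
    (g : ℝ → ℂ) (hgcont : ContinuousOn g (Set.Ici 0))
    (hgsq : ∀ t : ℝ, 0 ≤ t →
      g t ^ 2 = Complex.exp (Complex.I * (θ : ℂ)) * ((t ^ α : ℝ) : ℂ)
        - Complex.exp (Complex.I * (φ : ℂ)))
    (hg0 : g 0 = -Complex.I * Complex.exp (Complex.I * ((φ / 2 : ℝ) : ℂ)))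
    (S : ℝ → ℂ) (hS : ∀ t : ℝ, S t = ∫ s in (0 : ℝ)..t, g s) :
    (∀ t : ℝ, 0 ≤ t → (g t).im < 0) ∧
    StrictAntiOn (fun t => (S t).im) (Set.Ici 0) :=
  stmt9_general ((t0_pos hα0).le.trans hθ1) (hθ2.le.trans (min_le_left _ _)) (hφ2.trans_le hθ1)
    (lt_add_pi_of_t0_sub_lt hα0 (hθ2.trans_le (min_le_left _ _)) hδ2 hφ1) hgcont hgsq hg0 hS
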